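/- arXiv:1706.09130 — 3 statements merged into one kernel-verified Lean document; each statement's English description precedes it below -/
import Mathlib

section
/- Let G = (V,E) be a finite graph, q ≥ 1, E' ⊆ E, and let x = (x_e) and y = (y_e) be strictly positive edge weights with y_e = x_e for e ∉ E' and 0 < y_e < x_e for e ∈ E'. Then there exists a coupling Φ of P_{x,q} and P_{y,q}, i.e. a probability measure Φ on pairs (ω, η) of configurations, such that: (i) the first marginal of Φ is P_{x,q} and the second marginal is P_{y,q}; (ii) Φ(ω ≥ η) = 1; (iii) Φ-almost surely, ω_f = η_f for every edge f both of whose endpoints lie outside C_{E'}(ω). -/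
noncomputable section
open scoped Classical BigOperators

namespace RandomCluster

variable {V : Type*} [Fintype V] [DecidableEq V]

/-- A percolation configuration on the edge set `E`. -/
def Config (E : Finset (Sym2 V)) : Type _ := {e : Sym2 V // e ∈ E} → Bool

instance (E : Finset (Sym2 V)) : Fintype (Config E) := by unfold Config; infer_instance

/-- The set of open edges of a configuration. -/
def openEdges {E : Finset (Sym2 V)} (ω : Config E) : Set (Sym2 V) :=
  {e | ∃ h : e ∈ E, ω ⟨e, h⟩ = true}

/-- `κ(ω)`: the number of connected components of the spanning subgraph of open edges
(isolated vertices included). -/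
def kappa {E : Finset (Sym2 V)} (ω : Config E) : ℕ :=
  Nat.card (SimpleGraph.fromEdgeSet (openEdges ω)).ConnectedComponent

/-- The (unnormalized) random-cluster weight. -/
def weight (E : Finset (Sym2 V)) (x : Sym2 V → ℝ) (q : ℝ) (ω : Config E) : ℝ :=
  q ^ kappa ω * ∏ e : {e : Sym2 V // e ∈ E}, (if ω e then x e.1 else 1)

/-- The partition function. -/
def Z (E : Finset (Sym2 V)) (x : Sym2 V → ℝ) (q : ℝ) : ℝ :=
  ∑ ω : Config E, weight E x q ω

/-- The random-cluster probability measure. -/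
def prob (E : Finset (Sym2 V)) (x : Sym2 V → ℝ) (q : ℝ) (ω : Config E) : ℝ :=
  weight E x q ω / Z E x q

/-- The random-cluster measure conditioned on `{ω : ω e = i}`. -/
def condProb (E : Finset (Sym2 V)) (x : Sym2 V → ℝ) (q : ℝ) (e : {e : Sym2 V // e ∈ E})
    (i : Bool) (ω : Config E) : ℝ :=
  if ω e = i then prob E x q ω / (∑ η : Config E, if η e = i then prob E x q η else 0) else 0

end RandomCluster


/-- `v` lies in `C_{E'}(ω)`: the union of the open clusters of the endpoints of edges of `E'`. -/
def RandomCluster.inClusterOfSet {V : Type*} [Fintype V] [DecidableEq V] {E : Finset (Sym2 V)}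
    (E' : Finset (Sym2 V)) (ω : RandomCluster.Config E) (v : V) : Prop :=
  ∃ e' ∈ E', ∃ u ∈ e',
    (SimpleGraph.fromEdgeSet (RandomCluster.openEdges ω)).Reachable v u


namespace RandomCluster

section Abstract

variable {I : Type*} [Fintype I]

/-- `ω` agrees with `ξ` on `S`. -/
def AgreeOn (S : Finset I) (ξ ω : I → Bool) : Prop := ∀ f ∈ S, ω f = ξ f

/-- The weight restricted to configurations agreeing with `ξ` on `S`. -/
def restr (w : (I → Bool) → ℝ) (S : Finset I) (ξ ω : I → Bool) : ℝ :=
  if AgreeOn S ξ ω then w ω else 0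

/-- Total mass of the restricted weight. -/
def mass (w : (I → Bool) → ℝ) (S : Finset I) (ξ : I → Bool) : ℝ :=
  ∑ ω, restr w S ξ ω

/-- Equal to `ξ` on `S` and to `τ` off `S`. -/
def glue (S : Finset I) (τ ξ : I → Bool) : I → Bool := fun f => if f ∈ S then ξ f else τ f

lemma restr_nonneg {w : (I → Bool) → ℝ} (hw : ∀ ω, 0 < w ω) (S : Finset I) (ξ ω : I → Bool) :
    0 ≤ restr w S ξ ω := by
  unfold restr
  split_ifs
  · exact (hw ω).le
  · exact le_rfl

lemma mass_pos {w : (I → Bool) → ℝ} (hw : ∀ ω, 0 < w ω) (S : Finset I) (ξ : I → Bool) :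
    0 < mass w S ξ := by
  unfold mass
  refine Finset.sum_pos' (fun ω _ => restr_nonneg hw S ξ ω) ⟨ξ, Finset.mem_univ _, ?_⟩
  have : AgreeOn S ξ ξ := fun f _ => rfl
  simp [restr, this, hw]

lemma agreeOn_insert {S : Finset I} {f : I} (hf : f ∉ S) (ξ ω : I → Bool) (b : Bool) :
    AgreeOn (insert f S) (Function.update ξ f b) ω ↔ ω f = b ∧ AgreeOn S ξ ω := by
  unfold AgreeOn
  rw [Finset.forall_mem_insert]
  simp only [Function.update_self]
  refine and_congr_right fun _ => forall₂_congr fun g hg => ?_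
  have : g ≠ f := fun h => hf (h ▸ hg)
  rw [Function.update_of_ne this]

lemma restr_insert (w : (I → Bool) → ℝ) {S : Finset I} {f : I} (hf : f ∉ S) (ξ ω : I → Bool)
    (b : Bool) :
    restr w (insert f S) (Function.update ξ f b) ω = if ω f = b then restr w S ξ ω else 0 := by
  unfold restr
  rw [agreeOn_insert hf]
  by_cases h1 : ω f = b <;> by_cases h2 : AgreeOn S ξ ω <;> simp [h1, h2]

lemma restr_split (w : (I → Bool) → ℝ) {S : Finset I} {f : I} (hf : f ∉ S) (ξ ω : I → Bool) :
    restr w S ξ ω = restr w (insert f S) (Function.update ξ f true) ω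
      + restr w (insert f S) (Function.update ξ f false) ω := by
  rw [restr_insert w hf, restr_insert w hf]
  cases ω f <;> simp

lemma mass_split (w : (I → Bool) → ℝ) {S : Finset I} {f : I} (hf : f ∉ S) (ξ : I → Bool) :
    mass w S ξ = mass w (insert f S) (Function.update ξ f true)
      + mass w (insert f S) (Function.update ξ f false) := by
  unfold mass
  rw [← Finset.sum_add_distrib]
  exact Finset.sum_congr rfl fun ω _ => restr_split w hf ξ ω

lemma mass_true (w : (I → Bool) → ℝ) {S : Finset I} {f : I} (hf : f ∉ S) (ξ : I → Bool) :
    mass w (insert f S) (Function.update ξ f true)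
      = ∑ ω : I → Bool, (if ω f = true then (1 : ℝ) else 0) * restr w S ξ ω := by
  unfold mass
  refine Finset.sum_congr rfl fun ω _ => ?_
  rw [restr_insert w hf]
  split_ifs <;> simp

/-- Stochastic domination of one edge, from Holley's inequality. -/
lemma holley_edge {w w' : (I → Bool) → ℝ} (hw : ∀ ω, 0 < w ω) (hw' : ∀ ω, 0 < w' ω)
    (hH : ∀ a b, w' a * w b ≤ w' (a ⊓ b) * w (a ⊔ b))
    {S : Finset I} {f : I} (hf : f ∉ S) {ξ ζ : I → Bool} (hle : ζ ≤ ξ) :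
    mass w' (insert f S) (Function.update ζ f true) / mass w' S ζ
      ≤ mass w (insert f S) (Function.update ξ f true) / mass w S ξ := by
  have hZ := mass_pos hw S ξ
  have hZ' := mass_pos hw' S ζ
  have key := holley (fun ω : I → Bool => restr w' S ζ ω / mass w' S ζ)
    (fun ω => restr w S ξ ω / mass w S ξ)
    (fun ω : I → Bool => if ω f = true then (1 : ℝ) else 0)
    (fun ω => by dsimp; split_ifs <;> norm_num)
    (fun ω => div_nonneg (restr_nonneg hw' _ _ _) hZ'.le)
    (fun ω => div_nonneg (restr_nonneg hw _ _ _) hZ.le)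
    (by
      intro a b hab
      have := hab f
      dsimp
      cases h1 : a f <;> cases h2 : b f <;> rw [h1, h2] at this <;>
        first | exact absurd (show (true : Bool) ≤ false from this) (by decide) | simp)
    (by
      rw [← Finset.sum_div, ← Finset.sum_div]
      change mass w' S ζ / _ = mass w S ξ / _
      rw [div_self hZ.ne', div_self hZ'.ne'])
    (by
      intro a b
      rw [div_mul_div_comm, div_mul_div_comm]
      refine div_le_div_of_nonneg_right ?_ (mul_pos hZ' hZ).le
      by_cases ha : AgreeOn S ζ a
      · by_cases hb : AgreeOn S ξ b
        · have h1 : AgreeOn S ζ (a ⊓ b) := by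
            intro g hg
            rw [Pi.inf_apply, ha g hg, hb g hg]
            exact inf_eq_left.2 (hle g)
          have h2 : AgreeOn S ξ (a ⊔ b) := by
            intro g hg
            rw [Pi.sup_apply, ha g hg, hb g hg]
            exact sup_eq_right.2 (hle g)
          simp only [restr, ha, hb, h1, h2, if_true]
          exact hH a b
        · rw [show restr w S ξ b = 0 by simp [restr, hb], mul_zero]
          exact mul_nonneg (restr_nonneg hw' _ _ _) (restr_nonneg hw _ _ _)
      · rw [show restr w' S ζ a = 0 by simp [restr, ha], zero_mul]
        exact mul_nonneg (restr_nonneg hw' _ _ _) (restr_nonneg hw _ _ _))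
  rw [mass_true w hf, mass_true w' hf, Finset.sum_div, Finset.sum_div]
  simpa only [mul_div_assoc] using key

lemma agreeOn_glue (S : Finset I) (τ ξ : I → Bool) : AgreeOn S ξ (glue S τ ξ) := by
  intro f hf
  simp [glue, hf]

lemma glue_of_agree {S : Finset I} {ξ ω : I → Bool} (τ : I → Bool) (h : AgreeOn S ξ ω) :
    glue S (glue S ω τ) ξ = ω := by
  funext f
  by_cases hf : f ∈ S
  · simp [glue, hf, h f hf]
  · simp [glue, hf]

/-- The terminal step of the exploration. -/
lemma terminal {w w' : (I → Bool) → ℝ} (hw : ∀ ω, 0 < w ω) (hw' : ∀ ω, 0 < w' ω)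
    (S : Finset I) (ξ ζ : I → Bool) (c : ℝ)
    (hc : ∀ τ, w (glue S τ ξ) = c * w' (glue S τ ζ)) :
    ∃ Φ : (I → Bool) → (I → Bool) → ℝ, (∀ ω η, 0 ≤ Φ ω η) ∧
      (∀ ω, ∑ η, Φ ω η = restr w S ξ ω / mass w S ξ) ∧
      (∀ η, ∑ ω, Φ ω η = restr w' S ζ η / mass w' S ζ) ∧
      (∀ ω η, Φ ω η ≠ 0 → AgreeOn S ξ ω ∧ AgreeOn S ζ η ∧ ∀ f ∉ S, ω f = η f) := by
  have hcpos : 0 < c := by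
    have h := hc ξ
    have := hw (glue S ξ ξ)
    rw [h] at this
    exact (pos_iff_pos_of_mul_pos this).2 (hw' _)
  have hZ := mass_pos hw S ξ
  have hZ' := mass_pos hw' S ζ
  have hcond : ∀ ω η : I → Bool, (AgreeOn S ξ ω ∧ η = glue S ω ζ) ↔
      (AgreeOn S ζ η ∧ ω = glue S η ξ) := by
    intro ω η
    constructor
    · rintro ⟨h, rfl⟩
      exact ⟨agreeOn_glue _ _ _, (glue_of_agree _ h).symm⟩
    · rintro ⟨h, rfl⟩
      exact ⟨agreeOn_glue _ _ _, (glue_of_agree _ h).symm⟩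
  let Ψ : (I → Bool) → (I → Bool) → ℝ := fun ω η =>
    if AgreeOn S ξ ω ∧ η = glue S ω ζ then w ω else 0
  have hΨ1 : ∀ ω, ∑ η, Ψ ω η = restr w S ξ ω := by
    intro ω
    by_cases h : AgreeOn S ξ ω <;> simp [Ψ, restr, h]
  have hΨ2 : ∀ η, ∑ ω, Ψ ω η = c * restr w' S ζ η := by
    intro η
    simp only [Ψ, hcond]
    by_cases h : AgreeOn S ζ η
    · simp only [h, true_and, Finset.sum_ite_eq', Finset.mem_univ, if_true, restr, hc]
      congr 2
      funext f
      by_cases hf : f ∈ S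
      · simp [glue, hf, h f hf]
      · simp [glue, hf]
    · simp [h, restr]
  have hm : mass w S ξ = c * mass w' S ζ := by
    unfold mass
    rw [Finset.mul_sum, ← Finset.sum_congr rfl fun η _ => hΨ2 η, Finset.sum_comm]
    exact Finset.sum_congr rfl fun ω _ => (hΨ1 ω).symm
  refine ⟨fun ω η => Ψ ω η / mass w S ξ, ?_, ?_, ?_, ?_⟩
  · intro ω η
    refine div_nonneg ?_ hZ.le
    simp only [Ψ]
    split_ifs
    · exact (hw ω).le
    · exact le_rfl
  · intro ω
    rw [← Finset.sum_div, hΨ1]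
  · intro η
    rw [← Finset.sum_div, hΨ2, hm, mul_div_mul_left _ _ hcpos.ne']
  · intro ω η h
    have h' : AgreeOn S ξ ω ∧ η = glue S ω ζ := by
      by_contra hn
      exact h (by simp [Ψ, hn])
    obtain ⟨h1, rfl⟩ := h'
    refine ⟨h1, agreeOn_glue _ _ _, fun f hf => ?_⟩
    simp [glue, hf]

/-- The terminal step, in the form used by the exploration. -/
lemma exploration_end {w w' : (I → Bool) → ℝ} (hw : ∀ ω, 0 < w ω) (hw' : ∀ ω, 0 < w' ω)
    (t : (I → Bool) → Finset I) (ht : Monotone t)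
    (hterm : ∀ ξ ζ : I → Bool, ζ ≤ ξ → (∀ f ∉ t ξ, ξ f = false) →
      ∃ c : ℝ, ∀ τ, w (glue (t ξ) τ ξ) = c * w' (glue (t ξ) τ ζ))
    (S : Finset I) (ξ ζ : I → Bool) (hξ : ∀ f ∉ S, ξ f = false) (hle : ζ ≤ ξ) (hS : S = t ξ) :
    ∃ Φ : (I → Bool) → (I → Bool) → ℝ, (∀ ω η, 0 ≤ Φ ω η) ∧
      (∀ ω, ∑ η, Φ ω η = restr w S ξ ω / mass w S ξ) ∧
      (∀ η, ∑ ω, Φ ω η = restr w' S ζ η / mass w' S ζ) ∧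
      (∀ ω η, Φ ω η ≠ 0 → η ≤ ω ∧ ∀ f ∉ t ω, ω f = η f) := by
  obtain ⟨c, hc⟩ := hterm ξ ζ hle (hS ▸ hξ)
  rw [← hS] at hc
  obtain ⟨Φ, hp, hl, hr, hs⟩ := terminal hw hw' S ξ ζ c hc
  refine ⟨Φ, hp, hl, hr, fun ω η h => ?_⟩
  obtain ⟨h1, h2, h3⟩ := hs ω η h
  constructor
  · intro f
    by_cases hf : f ∈ S
    · rw [h1 f hf, h2 f hf]
      exact hle f
    · exact (h3 f hf).ge
  · intro f hf
    refine h3 f fun hfS => hf ?_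
    have hge : ξ ≤ ω := by
      intro g
      by_cases hg : g ∈ S
      · exact (h1 g hg).ge
      · rw [hξ g hg]
        exact bot_le
    exact ht hge (hS ▸ hfS)

/-- The exploration coupling. -/
lemma exploration {w w' : (I → Bool) → ℝ} (hw : ∀ ω, 0 < w ω) (hw' : ∀ ω, 0 < w' ω)
    (hH : ∀ a b, w' a * w b ≤ w' (a ⊓ b) * w (a ⊔ b))
    (t : (I → Bool) → Finset I) (ht : Monotone t)
    (hterm : ∀ ξ ζ : I → Bool, ζ ≤ ξ → (∀ f ∉ t ξ, ξ f = false) →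
      ∃ c : ℝ, ∀ τ, w (glue (t ξ) τ ξ) = c * w' (glue (t ξ) τ ζ)) :
    ∀ (n : ℕ) (S : Finset I) (ξ ζ : I → Bool), (Finset.univ \ S).card = n →
      (∀ f ∉ S, ξ f = false) → ζ ≤ ξ → S ⊆ t ξ →
      ∃ Φ : (I → Bool) → (I → Bool) → ℝ, (∀ ω η, 0 ≤ Φ ω η) ∧
        (∀ ω, ∑ η, Φ ω η = restr w S ξ ω / mass w S ξ) ∧
        (∀ η, ∑ ω, Φ ω η = restr w' S ζ η / mass w' S ζ) ∧
        (∀ ω η, Φ ω η ≠ 0 → η ≤ ω ∧ ∀ f ∉ t ω, ω f = η f) := by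
  intro n
  induction n with
  | zero =>
    intro S ξ ζ hn hξ hle hS
    have hSu : S = t ξ := by
      refine Finset.Subset.antisymm hS fun f _ => ?_
      rw [Finset.card_eq_zero, Finset.sdiff_eq_empty_iff_subset] at hn
      exact hn (Finset.mem_univ f)
    exact exploration_end hw hw' t ht hterm S ξ ζ hξ hle hSu
  | succ n ih =>
    intro S ξ ζ hn hξ hle hS
    by_cases hSu : S = t ξ
    · exact exploration_end hw hw' t ht hterm S ξ ζ hξ hle hSu
    obtain ⟨f, hft, hfS⟩ : ∃ f ∈ t ξ, f ∉ S := by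
      by_contra! hcon
      exact hSu (Finset.Subset.antisymm hS hcon)
    have hcard : (Finset.univ \ insert f S).card = n := by
      rw [Finset.sdiff_insert, Finset.card_erase_of_mem (by simp [hfS]), hn]
      rfl
    have hζf : ζ f = false := by
      have := hle f
      rw [hξ f hfS] at this
      exact le_bot_iff.1 this
    have hoff : ∀ b, ∀ g ∉ insert f S, Function.update ξ f b g = false := by
      intro b g hg
      rw [Finset.mem_insert, not_or] at hg
      rw [Function.update_of_ne hg.1]
      exact hξ g hg.2
    have hup : ∀ b, ξ ≤ Function.update ξ f b := by
      intro b
      rw [le_update_iff]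
      exact ⟨by rw [hξ f hfS]; exact bot_le, fun _ _ => le_rfl⟩
    have hSS : ∀ b, insert f S ⊆ t (Function.update ξ f b) := fun b =>
      (Finset.insert_subset hft hS).trans (ht (hup b))
    have hmono : ∀ b b' : Bool, b ≤ b' → Function.update ζ f b ≤ Function.update ξ f b' := by
      intro b b' hb
      rw [update_le_update_iff]
      exact ⟨hb, fun g _ => hle g⟩
    obtain ⟨Φ1, p1, l1, r1, s1⟩ := ih (insert f S) (Function.update ξ f true)
      (Function.update ζ f true) hcard (hoff _) (hmono _ _ le_rfl) (hSS _)
    obtain ⟨Φ2, p2, l2, r2, s2⟩ := ih (insert f S) (Function.update ξ f true)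
      (Function.update ζ f false) hcard (hoff _) (hmono _ _ bot_le) (hSS _)
    obtain ⟨Φ3, p3, l3, r3, s3⟩ := ih (insert f S) (Function.update ξ f false)
      (Function.update ζ f false) hcard (hoff _) (hmono _ _ le_rfl) (hSS _)
    have hab := holley_edge hw hw' hH hfS hle
    have hA1 := mass_pos hw (insert f S) (Function.update ξ f true)
    have hA0 := mass_pos hw (insert f S) (Function.update ξ f false)
    have hB1 := mass_pos hw' (insert f S) (Function.update ζ f true)
    have hB0 := mass_pos hw' (insert f S) (Function.update ζ f false)
    have hA := mass_split w hfS ξ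
    have hB := mass_split w' hfS ζ
    have hrA := restr_split w hfS ξ
    have hrB := restr_split w' hfS ζ
    generalize mass w (insert f S) (Function.update ξ f true) = A1 at *
    generalize mass w (insert f S) (Function.update ξ f false) = A0 at *
    generalize mass w' (insert f S) (Function.update ζ f true) = B1 at *
    generalize mass w' (insert f S) (Function.update ζ f false) = B0 at *
    rw [hA, hB] at hab
    rw [hA, hB]
    have ha1 : 1 - A1 / (A1 + A0) = A0 / (A1 + A0) := by field_simp; ring
    have hb1 : 1 - B1 / (B1 + B0) = B0 / (B1 + B0) := by field_simp; ring
    refine ⟨fun ω η => B1 / (B1 + B0) * Φ1 ω η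
      + (A1 / (A1 + A0) - B1 / (B1 + B0)) * Φ2 ω η + (1 - A1 / (A1 + A0)) * Φ3 ω η,
      ?_, ?_, ?_, ?_⟩
    · intro ω η
      have h1 := p1 ω η
      have h2 := p2 ω η
      have h3 := p3 ω η
      have h4 : 0 ≤ A1 / (A1 + A0) - B1 / (B1 + B0) := sub_nonneg.2 hab
      have h5 : 0 ≤ A0 / (A1 + A0) := by positivity
      have h6 : 0 ≤ B1 / (B1 + B0) := by positivity
      rw [ha1]
      exact add_nonneg (add_nonneg (mul_nonneg h6 h1) (mul_nonneg h4 h2)) (mul_nonneg h5 h3)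
    · intro ω
      rw [Finset.sum_add_distrib, Finset.sum_add_distrib, ← Finset.mul_sum, ← Finset.mul_sum,
        ← Finset.mul_sum, l1, l2, l3, hrA, ha1]
      field_simp
      ring
    · intro η
      have : ∀ u v : ℝ, B1 / (B1 + B0) * u + (A1 / (A1 + A0) - B1 / (B1 + B0)) * v
          + (1 - A1 / (A1 + A0)) * v = B1 / (B1 + B0) * u + (1 - B1 / (B1 + B0)) * v := by
        intro u v; ring
      rw [Finset.sum_add_distrib, Finset.sum_add_distrib, ← Finset.mul_sum, ← Finset.mul_sum,
        ← Finset.mul_sum, r1, r2, r3, hrB, this, hb1]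
      field_simp
    · intro ω η h
      by_cases h1 : Φ1 ω η = 0
      · by_cases h2 : Φ2 ω η = 0
        · by_cases h3 : Φ3 ω η = 0
          · exact absurd (by simp [h1, h2, h3]) h
          · exact s3 ω η h3
        · exact s2 ω η h2
      · exact s1 ω η h1

end Abstract

section Graph

variable {V : Type*} [Fintype V] [DecidableEq V]

lemma sum_config {E : Finset (Sym2 V)} (inst : Fintype ({e : Sym2 V // e ∈ E} → Bool))
    (F : Config E → ℝ) :
    ∑ ω : Config E, F ω = ∑ ω : {e : Sym2 V // e ∈ E} → Bool, F ω :=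
  @Fintype.sum_equiv (Config E) ({e : Sym2 V // e ∈ E} → Bool) ℝ _ inst _
    (Equiv.refl (Config E)) _ _ fun _ => rfl

/-- Functions constant along open edges. -/
def kerSpace {E : Finset (Sym2 V)} (ω : Config E) : Submodule ℝ (V → ℝ) where
  carrier := {f | ∀ u v, s(u, v) ∈ openEdges ω → f u = f v}
  add_mem' := by
    intro a b ha hb u v h
    simp [ha u v h, hb u v h]
  zero_mem' := by
    intro u v _
    rfl
  smul_mem' := by
    intro c a ha u v h
    simp [ha u v h]

lemma mem_kerSpace {E : Finset (Sym2 V)} (ω : Config E) (f : V → ℝ) :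
    f ∈ kerSpace ω ↔ ∀ u v, s(u, v) ∈ openEdges ω → f u = f v := Iff.rfl

lemma kappa_eq {E : Finset (Sym2 V)} (ω : Config E) :
    kappa ω = Module.finrank ℝ (kerSpace ω) := by
  set H := SimpleGraph.fromEdgeSet (openEdges ω) with hH
  let L : (H.ConnectedComponent → ℝ) →ₗ[ℝ] (V → ℝ) :=
    LinearMap.funLeft ℝ ℝ H.connectedComponentMk
  have hinj : Function.Injective L :=
    LinearMap.funLeft_injective_of_surjective ℝ ℝ _ Quot.mk_surjective
  have hrange : LinearMap.range L = kerSpace ω := by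
    ext f
    rw [mem_kerSpace, LinearMap.mem_range]
    constructor
    · rintro ⟨g, rfl⟩ u v huv
      by_cases h : u = v
      · rw [h]
      have hadj : H.Adj u v := by
        rw [hH, SimpleGraph.fromEdgeSet_adj]
        exact ⟨huv, h⟩
      have : H.connectedComponentMk u = H.connectedComponentMk v :=
        SimpleGraph.ConnectedComponent.sound hadj.reachable
      simp [L, LinearMap.funLeft_apply, this]
    · intro hf
      have hreach : ∀ u v, H.Reachable u v → f u = f v := by
        rintro u v ⟨p⟩
        induction p with
        | nil => rfl
        | cons h p ih =>
          rw [hH, SimpleGraph.fromEdgeSet_adj] at h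
          exact (hf _ _ h.1).trans ih
      refine ⟨Quot.lift f hreach, ?_⟩
      funext v
      rfl
  rw [← hrange, LinearMap.finrank_range_of_inj hinj, Module.finrank_fintype_fun_eq_card, kappa,
    Nat.card_eq_fintype_card]

lemma mem_openEdges {E : Finset (Sym2 V)} (ω : Config E) (e : Sym2 V) :
    e ∈ openEdges ω ↔ ∃ h : e ∈ E, ω ⟨e, h⟩ = true := Iff.rfl

/-- Supremum of configurations. -/
def csup {E : Finset (Sym2 V)} (a b : Config E) : Config E := fun e => a e ⊔ b e

/-- Infimum of configurations. -/
def cinf {E : Finset (Sym2 V)} (a b : Config E) : Config E := fun e => a e ⊓ b e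

lemma kerSpace_csup {E : Finset (Sym2 V)} (a b : Config E) :
    kerSpace (csup a b) = kerSpace a ⊓ kerSpace b := by
  ext f
  simp only [Submodule.mem_inf, mem_kerSpace, mem_openEdges, csup]
  constructor
  · intro h
    constructor
    · rintro u v ⟨he, ho⟩
      exact h u v ⟨he, by simp [ho]⟩
    · rintro u v ⟨he, ho⟩
      exact h u v ⟨he, by simp [ho]⟩
  · rintro ⟨h1, h2⟩ u v ⟨he, ho⟩
    rcases Bool.or_eq_true_iff.1 ho with ho | ho
    · exact h1 u v ⟨he, ho⟩
    · exact h2 u v ⟨he, ho⟩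

lemma le_kerSpace_cinf {E : Finset (Sym2 V)} (a b : Config E) :
    kerSpace a ⊔ kerSpace b ≤ kerSpace (cinf a b) := by
  refine sup_le ?_ ?_
  · rintro f h u v ⟨he, ho⟩
    exact h u v ⟨he, (Bool.and_eq_true_iff.1 ho).1⟩
  · rintro f h u v ⟨he, ho⟩
    exact h u v ⟨he, (Bool.and_eq_true_iff.1 ho).2⟩

lemma kappa_supermodular {E : Finset (Sym2 V)} (a b : Config E) :
    kappa a + kappa b ≤ kappa (cinf a b) + kappa (csup a b) := by
  simp only [kappa_eq]
  rw [← Submodule.finrank_sup_add_finrank_inf_eq, kerSpace_csup]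
  exact Nat.add_le_add_right (Submodule.finrank_mono (le_kerSpace_cinf a b)) _

lemma kappa_disjoint {E : Finset (Sym2 V)} (a b : Config E) (A : Set V)
    (ha : ∀ e ∈ openEdges a, ∀ v ∈ e, v ∈ A) (hb : ∀ e ∈ openEdges b, ∀ v ∈ e, v ∉ A) :
    kappa a + kappa b = Fintype.card V + kappa (csup a b) := by
  simp only [kappa_eq]
  rw [← Submodule.finrank_sup_add_finrank_inf_eq, kerSpace_csup]
  have : kerSpace a ⊔ kerSpace b = ⊤ := by
    rw [eq_top_iff]
    rintro f -
    rw [Submodule.mem_sup]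
    refine ⟨fun v => if v ∈ A then 0 else f v, ?_, fun v => if v ∈ A then f v else 0, ?_, ?_⟩
    · intro u v h
      simp [ha _ h u (by simp), ha _ h v (by simp)]
    · intro u v h
      simp [hb _ h u (by simp), hb _ h v (by simp)]
    · funext v
      by_cases h : v ∈ A <;> simp [h]
  rw [this, finrank_top, Module.finrank_fintype_fun_eq_card]

lemma weight_pos {E : Finset (Sym2 V)} {x : Sym2 V → ℝ} {q : ℝ} (hq : 1 ≤ q)
    (hx : ∀ e ∈ E, 0 < x e) (ω : Config E) : 0 < weight E x q ω := by
  unfold weight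
  refine mul_pos (pow_pos (by linarith) _) (Finset.prod_pos fun e _ => ?_)
  split_ifs
  · exact hx _ e.2
  · exact one_pos

lemma weight_holley {E : Finset (Sym2 V)} {x y : Sym2 V → ℝ} {q : ℝ} (hq : 1 ≤ q)
    (hy : ∀ e ∈ E, 0 < y e) (hyx : ∀ e ∈ E, y e ≤ x e) (a b : Config E) :
    weight E y q a * weight E x q b ≤ weight E y q (cinf a b) * weight E x q (csup a b) := by
  have hx : ∀ e ∈ E, 0 < x e := fun e he => (hy e he).trans_le (hyx e he)
  unfold weight
  rw [mul_mul_mul_comm, mul_mul_mul_comm (q ^ kappa (cinf a b)), ← pow_add, ← pow_add,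
    ← Finset.prod_mul_distrib, ← Finset.prod_mul_distrib]
  refine mul_le_mul (pow_le_pow_right₀ hq (kappa_supermodular a b)) ?_ ?_
    (pow_nonneg (by linarith) _)
  · refine Finset.prod_le_prod (fun e _ => ?_) (fun e _ => ?_)
    · have h1 := hx _ e.2
      have h2 := hy _ e.2
      split_ifs <;> positivity
    · have h1 := hyx _ e.2
      unfold cinf csup
      cases a e <;> cases b e <;> simp [h1]
  · refine Finset.prod_nonneg fun e _ => ?_
    have h1 := hx _ e.2
    have h2 := hy _ e.2
    split_ifs <;> positivity

/-- Edges touching `C_{E'}(ω)`. -/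
def touch {E : Finset (Sym2 V)} (E' : Finset (Sym2 V)) (ω : {e : Sym2 V // e ∈ E} → Bool) :
    Finset {e : Sym2 V // e ∈ E} :=
  Finset.univ.filter fun f => ∃ v ∈ f.1, inClusterOfSet (E := E) E' ω v

lemma mem_touch {E : Finset (Sym2 V)} (E' : Finset (Sym2 V)) (ω : {e : Sym2 V // e ∈ E} → Bool)
    (f : {e : Sym2 V // e ∈ E}) :
    f ∈ touch E' ω ↔ ∃ v ∈ f.1, inClusterOfSet (E := E) E' ω v := by
  simp [touch]

lemma touch_mono {E : Finset (Sym2 V)} (E' : Finset (Sym2 V)) :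
    Monotone (touch (E := E) E') := by
  intro a b hab f hf
  rw [mem_touch] at hf ⊢
  obtain ⟨v, hv, e', he', u, hu, hr⟩ := hf
  refine ⟨v, hv, e', he', u, hu, hr.mono ?_⟩
  refine SimpleGraph.fromEdgeSet_mono ?_
  rintro e ⟨he, ho⟩
  refine ⟨he, ?_⟩
  have := hab ⟨e, he⟩
  rw [show a ⟨e, he⟩ = true from ho] at this
  exact top_le_iff.1 this

/-- The part of `τ` off `S`. -/
def offPart {E : Finset (Sym2 V)} (S : Finset {e : Sym2 V // e ∈ E})
    (τ : {e : Sym2 V // e ∈ E} → Bool) : Config E := fun f => if f ∈ S then false else τ f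

lemma weight_glue {E : Finset (Sym2 V)} {x : Sym2 V → ℝ} {q : ℝ}
    (S : Finset {e : Sym2 V // e ∈ E}) (τ ξ : {e : Sym2 V // e ∈ E} → Bool)
    (hξ : ∀ f ∉ S, ξ f = false) (A : Set V)
    (hA : ∀ e ∈ openEdges (E := E) ξ, ∀ v ∈ e, v ∈ A)
    (hS : ∀ f ∉ S, ∀ v ∈ f.1, v ∉ A) :
    weight E x q ξ * weight E x q (offPart S τ) =
      q ^ Fintype.card V * weight E x q (glue S τ ξ) := by
  have hg : (glue S τ ξ : Config E) = csup ξ (offPart S τ) := by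
    funext f
    by_cases hf : f ∈ S
    · simp [glue, csup, offPart, hf]
    · simp [glue, csup, offPart, hf, hξ f hf]
  have hk := kappa_disjoint (E := E) ξ (offPart S τ) A hA (by
    rintro e ⟨he, ho⟩
    refine hS ⟨e, he⟩ fun hc => ?_
    simp [offPart, hc] at ho)
  unfold weight
  rw [mul_mul_mul_comm, ← pow_add, hk, hg, pow_add, mul_assoc, ← Finset.prod_mul_distrib]
  congr 2
  refine Finset.prod_congr rfl fun f _ => ?_
  by_cases hf : f ∈ S
  · simp [csup, offPart, hf]
  · simp [csup, offPart, hf, hξ f hf]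

end Graph

end RandomCluster

open RandomCluster

theorem stmt1 {V : Type*} [Fintype V] [DecidableEq V] (E E' : Finset (Sym2 V))
    (hE' : E' ⊆ E) (x y : Sym2 V → ℝ) (q : ℝ) (hq : 1 ≤ q)
    (hx : ∀ e ∈ E, 0 < x e)
    (hy_off : ∀ e ∈ E, e ∉ E' → y e = x e)
    (hy_on : ∀ e ∈ E', 0 < y e ∧ y e < x e) :
    ∃ Φ : RandomCluster.Config E × RandomCluster.Config E → ℝ,
      (∀ p, 0 ≤ Φ p) ∧
      -- (i) the marginals of Φ are P_{x,q} and P_{y,q}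
      (∀ ω : RandomCluster.Config E,
        ∑ η : RandomCluster.Config E, Φ (ω, η) = RandomCluster.prob E x q ω) ∧
      (∀ η : RandomCluster.Config E,
        ∑ ω : RandomCluster.Config E, Φ (ω, η) = RandomCluster.prob E y q η) ∧
      -- (ii) Φ(ω ≥ η) = 1
      (∑ p : RandomCluster.Config E × RandomCluster.Config E,
          (if ∀ f, p.2 f ≤ p.1 f then Φ p else 0)) = 1 ∧
      -- (iii) Φ-a.s., ω and η agree on every edge whose endpoints both lie outside C_{E'}(ω)
      (∀ ω η : RandomCluster.Config E, Φ (ω, η) ≠ 0 →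
        ∀ f : {e : Sym2 V // e ∈ E},
          (∀ v ∈ f.1, ¬ RandomCluster.inClusterOfSet E' ω v) → ω f = η f) := by
  have hy : ∀ e ∈ E, 0 < y e := by
    intro e he
    by_cases h : e ∈ E'
    · exact (hy_on e h).1
    · rw [hy_off e he h]
      exact hx e he
  have hyx : ∀ e ∈ E, y e ≤ x e := by
    intro e he
    by_cases h : e ∈ E'
    · exact (hy_on e h).2.le
    · exact (hy_off e he h).le
  have hqpos : 0 < q := by linarith
  have hwx := weight_pos hq hx
  have hwy := weight_pos hq hy
  have hterm : ∀ ξ ζ : {e : Sym2 V // e ∈ E} → Bool, ζ ≤ ξ →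
      (∀ f ∉ touch E' ξ, ξ f = false) →
      ∃ c : ℝ, ∀ τ, weight E x q (glue (touch E' ξ) τ ξ)
        = c * weight E y q (glue (touch E' ξ) τ ζ) := by
    intro ξ ζ hle hξ
    have hζ : ∀ f ∉ touch E' ξ, ζ f = false := by
      intro f hf
      have := hle f
      rw [hξ f hf] at this
      exact le_bot_iff.1 this
    have hopen : openEdges (E := E) ζ ⊆ openEdges (E := E) ξ := by
      rintro e ⟨he, ho⟩
      refine ⟨he, ?_⟩
      have := hle ⟨e, he⟩
      rw [show ζ ⟨e, he⟩ = true from ho] at this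
      exact top_le_iff.1 this
    have hS : ∀ f ∉ touch E' ξ, ∀ v ∈ f.1, v ∉ {v | inClusterOfSet (E := E) E' ξ v} := by
      intro f hf v hv hc
      exact hf ((mem_touch E' ξ f).2 ⟨v, hv, hc⟩)
    have hA : ∀ e ∈ openEdges (E := E) ξ, ∀ v ∈ e,
        v ∈ {v | inClusterOfSet (E := E) E' ξ v} := by
      intro e he v hv
      obtain ⟨heE, ho⟩ := he
      have hmem : (⟨e, heE⟩ : {e : Sym2 V // e ∈ E}) ∈ touch E' ξ := by
        by_contra hn
        have := hξ _ hn
        rw [show ξ ⟨e, heE⟩ = true from ho] at this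
        exact Bool.noConfusion this
      obtain ⟨u, hu, e', he', z, hz, hr⟩ := (mem_touch E' ξ _).1 hmem
      refine ⟨e', he', z, hz, ?_⟩
      by_cases huv : v = u
      · rw [huv]
        exact hr
      have hadj : (SimpleGraph.fromEdgeSet (openEdges (E := E) ξ)).Adj v u := by
        rw [SimpleGraph.fromEdgeSet_adj]
        refine ⟨?_, huv⟩
        rw [← (Sym2.mem_and_mem_iff huv).1 ⟨hv, hu⟩]
        exact ⟨heE, ho⟩
      exact hadj.reachable.trans hr
    refine ⟨weight E x q ξ / weight E y q ζ, fun τ => ?_⟩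
    have e1 := weight_glue (x := x) (q := q) _ τ ξ hξ _ hA hS
    have e2 := weight_glue (x := y) (q := q) _ τ ζ hζ _ (fun e he => hA e (hopen he)) hS
    have e3 : weight E x q (offPart (touch E' ξ) τ) = weight E y q (offPart (touch E' ξ) τ) := by
      unfold weight
      congr 1
      refine Finset.prod_congr rfl fun f _ => ?_
      by_cases hf : f ∈ touch E' ξ
      · simp [offPart, hf]
      · have : f.1 ∉ E' := by
          intro hfE
          obtain ⟨v, hv⟩ : ∃ v, v ∈ f.1 := ⟨_, Sym2.out_fst_mem f.1⟩
          exact hf ((mem_touch E' ξ f).2 ⟨v, hv, f.1, hfE, v, hv, SimpleGraph.Reachable.refl _⟩)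
        rw [hy_off _ f.2 this]
    rw [e3] at e1
    have hz := hwy ζ
    have hqn : 0 < q ^ Fintype.card V := pow_pos hqpos _
    rw [div_mul_eq_mul_div, eq_div_iff hz.ne']
    apply mul_left_cancel₀ hqn.ne'
    rw [← mul_assoc, ← e1]
    linear_combination (weight E x q ξ) * e2
  obtain ⟨Φ, hp, hl, hr, hs⟩ := exploration (w := weight E x q) (w' := weight E y q) hwx hwy
    (fun a b => weight_holley hq hy hyx a b) (touch E') (touch_mono E') hterm _ ∅
    (fun _ => false) (fun _ => false) rfl (fun _ _ => rfl) le_rfl (Finset.empty_subset _)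
  have hmass : ∀ z : Sym2 V → ℝ, mass (weight E z q) ∅ (fun _ => false) = Z E z q := by
    intro z
    unfold mass Z
    refine Eq.trans (Finset.sum_congr rfl fun ω _ => ?_) (sum_config _ (weight E z q)).symm
    simp [restr, AgreeOn]
  have hrestr : ∀ (z : Sym2 V → ℝ) (ω : Config E),
      restr (weight E z q) ∅ (fun _ => false) ω = weight E z q ω := by
    intro z ω
    simp [restr, AgreeOn]
  have hl' : ∀ ω : Config E, ∑ η : Config E, Φ ω η = prob E x q ω := by
    intro ω
    unfold prob
    rw [← hmass, ← hrestr]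
    exact (sum_config _ (fun η => Φ ω η)).trans (hl ω)
  have hr' : ∀ η : Config E, ∑ ω : Config E, Φ ω η = prob E y q η := by
    intro η
    unfold prob
    rw [← hmass, ← hrestr]
    exact (sum_config _ (fun ω => Φ ω η)).trans (hr η)
  refine ⟨fun p => Φ p.1 p.2, fun p => hp _ _, hl', hr', ?_, ?_⟩
  · have h1 : ∀ p : Config E × Config E,
        (if ∀ f, p.2 f ≤ p.1 f then Φ p.1 p.2 else 0) = Φ p.1 p.2 := by
      intro p
      split_ifs with h
      · rfl
      · by_contra hne
        exact h (hs p.1 p.2 (Ne.symm hne)).1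
    rw [Finset.sum_congr rfl fun p _ => h1 p, Fintype.sum_prod_type,
      Finset.sum_congr rfl fun ω _ => hl' ω]
    unfold prob
    rw [← Finset.sum_div]
    refine div_self (ne_of_gt ?_)
    change 0 < Z E x q
    rw [← hmass]
    exact mass_pos hwx _ _
  · intro ω η h f hf
    refine (hs ω η h).2 f fun hm => ?_
    obtain ⟨v, hv, hc⟩ := (mem_touch E' ω f).1 hm
    exact hf v hv hc
end
end

section
/- Fix n ≥ 1, b_L ∈ B_L, a word 𝐱 ∈ 𝒜^n and b_R ∈ B_R, and regard b_L, x_1, …, x_n, b_R as occupying positions 0, 1, …, n+1. Let A ⊆ 𝓘_n be the event that the stick-percolation configuration induced by the memory configuration I has at least two clusters and that the sum of the lengths of the first and last clusters is strictly less than n+2. Then the exact factorization identity holds: Σ_{I ∈ A} Ψ_n(b_L ⊔ 𝐱 ⊔ b_R, I) = Σ ρ_L(first block) · (∏_{j=1}^k 𝐩(j-th middle block)) · ρ_R(last block), where the sum on the right runs over all k ≥ 1 and all decompositions of the positions {0, …, n+1} into k+2 consecutive blocks of lengths l, l_1, …, l_k, r with l, r, l_1, …, l_k ≥ 1 and l +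 l_1 + ⋯ + l_k + r = n+2, the first block being b_L together with the first l−1 letters of 𝐱, the middle blocks being the corresponding consecutive subwords of 𝐱, and the last block being the last r−1 letters of 𝐱 together with b_R. -/
noncomputable section
open scoped Classical BigOperators

namespace Renewal

variable {A BL BR : Type*}

/-- The multiplicative extension of the kernel `Ψ` to words. -/
def psiExt (ψ : BL × List A → A ⊕ BR → ℝ) (b : BL × List A) : List A ⊕ BR → ℝ
  | Sum.inl z => ∏ k : Fin z.length, ψ (b.1, b.2 ++ z.take k.1) (Sum.inl (z.get k))
  | Sum.inr r => ψ b (Sum.inr r)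

/-- `a_k(s | y)`: the infimum of `Ψ(s | ·)` over all left contexts ending with the last `k`
letters of the word `y`. -/
def aW (ψ : BL × List A → A ⊕ BR → ℝ) (y : List A) (k : ℕ) (s : A ⊕ BR) : ℝ :=
  ⨅ l : BL × List A, ψ (l.1, l.2 ++ y.drop (y.length - k)) s

/-- `a_k(s | b_L ⊔ y)`, with the convention `a_k = Ψ(s | b_L ⊔ y)` for `k > |y|`. -/
def aCtx (ψ : BL × List A → A ⊕ BR → ℝ) (bL : BL) (y : List A) (k : ℕ) (s : A ⊕ BR) : ℝ :=
  if k ≤ y.length then aW ψ y k s else ψ (bL, y) s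

/-- `Δ_k(s | y)` (pure word context). -/
def dW (ψ : BL × List A → A ⊕ BR → ℝ) (y : List A) : ℕ → A ⊕ BR → ℝ
  | 0, s => aW ψ y 0 s
  | k + 1, s => aW ψ y (k + 1) s - aW ψ y k s

/-- `Δ_k(s | b_L ⊔ y)`. -/
def dCtx (ψ : BL × List A → A ⊕ BR → ℝ) (bL : BL) (y : List A) : ℕ → A ⊕ BR → ℝ
  | 0, s => aCtx ψ bL y 0 s
  | k + 1, s => aCtx ψ bL y (k + 1) s - aCtx ψ bL y k s

/-- Memory configurations over the positions `0, …, P-1`: `I k ≤ k`. -/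
def Mem (P : ℕ) : Type _ := ∀ k : Fin P, Fin (k.1 + 1)

instance (P : ℕ) : Fintype (Mem P) := by unfold Mem; infer_instance

/-- The value of a memory configuration, as a function `ℕ → ℕ`. -/
def memVal {P : ℕ} (I : Mem P) (k : ℕ) : ℕ := if h : k < P then (I ⟨k, h⟩).1 else 0

/-- The edge `(j, j+1)` is a cut of the stick configuration induced by `I` on the
positions `0, …, P-1`: no stick `(m - I m - 1/2, m + 1/2)` covers the point `j + 1/2`. -/
def cutAt (P : ℕ) (I : ℕ → ℕ) (j : ℕ) : Prop :=
  ∀ m, j < m → m < P → I m + j + 1 ≤ m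

variable (w : BL → ℝ) (ψ : BL × List A → A ⊕ BR → ℝ)

/-- `Ψ_n(b_L ⊔ 𝐱 ⊔ b_R)`. -/
def psiSeq (bL : BL) (x : List A) (bR : BR) : ℝ :=
  w bL * (∏ k : Fin x.length, ψ (bL, x.take k.1) (Sum.inl (x.get k))) *
    ψ (bL, x) (Sum.inr bR)

/-- `Ψ_n(b_L ⊔ 𝐱 ⊔ b_R, I)`: the weight of the sequence together with a memory
configuration `I` over the positions `0, …, n+1`. -/
def memW (bL : BL) (x : List A) (bR : BR) (I : ℕ → ℕ) : ℝ :=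
  w bL * (∏ k : Fin x.length, dCtx ψ bL (x.take k.1) (I (k.1 + 1)) (Sum.inl (x.get k))) *
    dCtx ψ bL x (I (x.length + 1)) (Sum.inr bR)

/-- `ρ_L(b_L ⊔ 𝐱)`: sum over memory configurations forming a single cluster
over the positions `0, …, |𝐱|`. -/
def rhoL (bL : BL) (x : List A) : ℝ :=
  w bL * ∑ I : Mem (x.length + 1),
    if ∀ j, j < x.length → ¬ cutAt (x.length + 1) (memVal I) j then
      ∏ k : Fin x.length, dCtx ψ bL (x.take k.1) (memVal I (k.1 + 1)) (Sum.inl (x.get k))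
    else 0

/-- `𝐩(𝐱)`: sum over memory configurations with clusters `(1, |𝐱|)` over the
positions `0, …, |𝐱|`. -/
def pW (x : List A) : ℝ :=
  ∑ I : Mem (x.length + 1),
    if cutAt (x.length + 1) (memVal I) 0 ∧
        (∀ j, 0 < j → j < x.length → ¬ cutAt (x.length + 1) (memVal I) j) then
      ∏ k : Fin x.length, dW ψ (x.take k.1) (memVal I (k.1 + 1)) (Sum.inl (x.get k))
    else 0

/-- `ρ_R(𝐱 ⊔ b_R)`: sum over memory configurations with clusters `(1, |𝐱|+1)` over the
positions `0, …, |𝐱|+1`. -/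
def rhoR (x : List A) (bR : BR) : ℝ :=
  ∑ I : Mem (x.length + 2),
    if cutAt (x.length + 2) (memVal I) 0 ∧
        (∀ j, 0 < j → j < x.length + 1 → ¬ cutAt (x.length + 2) (memVal I) j) then
      (∏ k : Fin x.length, dW ψ (x.take k.1) (memVal I (k.1 + 1)) (Sum.inl (x.get k))) *
        dW ψ x (memVal I (x.length + 1)) (Sum.inr bR)
    else 0

/-- `μ_n`: the total mass of `Ψ_n`. -/
def mu (n : ℕ) : ℝ :=
  ∑' bL : BL, ∑' bR : BR, ∑' x : {x : List A // x.length = n}, psiSeq w ψ bL x.1 bR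

/-- `Ψ_n(B)` for an event `B` on pairs (sequence, memory configuration). -/
def psiEvent (n : ℕ) (P : BL → List A → BR → (ℕ → ℕ) → Prop) : ℝ :=
  ∑' bL : BL, ∑' bR : BR, ∑' x : {x : List A // x.length = n},
    ∑ I : Mem (n + 2), if P bL x.1 bR (memVal I) then memW w ψ bL x.1 bR (memVal I) else 0

end Renewal

namespace Renewal

/-- The set of cut edges `j ∈ {0, …, n}` of the stick configuration induced by `I`
on the positions `0, …, n+1`. -/
noncomputable def cutFinset (n : ℕ) (I : ℕ → ℕ) : Finset ℕ :=
  (Finset.range (n + 1)).filter fun j => cutAt (n + 2) I j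

/-- The number of clusters of the induced stick configuration. -/
noncomputable def numClusters (n : ℕ) (I : ℕ → ℕ) : ℕ := (cutFinset n I).card + 1

/-- The length of the first (leftmost) cluster. -/
noncomputable def firstClusterLen (n : ℕ) (I : ℕ → ℕ) : ℕ :=
  if h : (cutFinset n I).Nonempty then (cutFinset n I).min' h + 1 else n + 2

/-- The length of the last (rightmost) cluster. -/
noncomputable def lastClusterLen (n : ℕ) (I : ℕ → ℕ) : ℕ :=
  if h : (cutFinset n I).Nonempty then n + 1 - (cutFinset n I).max' h else 0

end Renewal

namespace Renewal

lemma memVal_le {P : ℕ} (I : Mem P) (k : ℕ) : memVal I k ≤ k := by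
  unfold memVal
  split_ifs with h
  · exact Nat.lt_succ_iff.mp (I ⟨k, h⟩).2
  · exact Nat.zero_le _

/-- Build a memory configuration from a function. -/
def mkMem (P : ℕ) (f : ℕ → ℕ) : Mem P := fun k => ⟨min (f k.1) k.1, by
  exact Nat.lt_succ_of_le (min_le_right _ _)⟩

lemma memVal_mkMem {P : ℕ} (f : ℕ → ℕ) (hf : ∀ k, k < P → f k ≤ k) (k : ℕ) (hk : k < P) :
    memVal (mkMem P f) k = f k := by
  simp [memVal, mkMem, hk, hf k hk]

lemma mem_ext {P : ℕ} {I J : Mem P} (h : ∀ k, k < P → memVal I k = memVal J k) : I = J := by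
  funext k
  have := h k.1 k.2
  simp only [memVal, k.2, dif_pos] at this
  exact Fin.ext this

/-- Glue two configurations. -/
def glue (a : ℕ) (f g : ℕ → ℕ) (m : ℕ) : ℕ := if m < a then f m else g (m - a)

lemma cut_glue_left {a b j : ℕ} (f g : ℕ → ℕ) (hg : ∀ k, g k ≤ k) (hj : j < a) :
    cutAt (a + 1 + b) (glue (a + 1) f g) j ↔ cutAt (a + 1) f j := by
  constructor
  · intro h m h1 h2
    have := h m h1 (by omega)
    simpa [glue, h2] using this
  · intro h m h1 h2
    unfold glue
    split_ifs with h3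
    · exact h m h1 h3
    · have := hg (m - (a + 1)); omega

lemma cut_glue_right {a b j : ℕ} (f g : ℕ → ℕ) :
    cutAt (a + b) (glue a f g) (a + j) ↔ cutAt b g j := by
  constructor
  · intro h m h1 h2
    have := h (a + m) (by omega) (by omega)
    simp [glue] at this
    omega
  · intro h m h1 h2
    have := h (m - a) (by omega) (by omega)
    have h3 : ¬ m < a := by omega
    simp only [glue, h3, if_false]
    omega

lemma sum_split (a b P : ℕ) (hP : P = a + 1 + b) (F : (ℕ → ℕ) → ℝ)
    (hF : ∀ f g : ℕ → ℕ, (∀ k, k < P → f k = g k) → F f = F g) :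
    (∑ I : Mem P, if cutAt P (memVal I) a then F (memVal I) else 0) =
      ∑ I : Mem (a + 1), ∑ J : Mem b, F (glue (a + 1) (memVal I) (memVal J)) := by
  subst hP
  rw [← Finset.sum_filter, ← Fintype.sum_prod_type' (f := fun (I : Mem (a+1)) (J : Mem b) =>
    F (glue (a + 1) (memVal I) (memVal J)))]
  have hl : ∀ (I : Mem (a+1)) (J : Mem b) (k : ℕ), glue (a + 1) (memVal I) (memVal J) k ≤ k := by
    intro I J k
    unfold glue
    split_ifs
    · exact memVal_le _ _
    · exact (memVal_le _ _).trans (Nat.sub_le _ _)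
  refine Finset.sum_bij'
    (fun I _ => (mkMem (a + 1) (memVal I), mkMem b (fun k => memVal I (a + 1 + k))))
    (fun p _ => mkMem (a + 1 + b) (glue (a + 1) (memVal p.1) (memVal p.2))) ?_ ?_ ?_ ?_ ?_
  · intros; simp
  · rintro ⟨I, J⟩ -
    simp only [Finset.mem_filter, Finset.mem_univ, true_and]
    intro m h1 h2
    rw [memVal_mkMem _ (fun k _ => hl I J k) _ h2]
    have h3 : ¬ m < a + 1 := by omega
    simp only [glue, h3, if_false]
    have := memVal_le J (m - (a + 1)); omega
  · intro I hI
    simp only [Finset.mem_filter, Finset.mem_univ, true_and] at hI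
    apply mem_ext
    intro k hk
    rw [memVal_mkMem _ (fun k _ => hl _ _ k) _ hk]
    unfold glue
    split_ifs with h
    · exact memVal_mkMem _ (fun k _ => memVal_le _ _) _ h
    · rw [memVal_mkMem _ _ _ (by omega)]
      · congr 1; omega
      · intro k hk
        have := hI (a + 1 + k) (by omega) (by omega)
        omega
  · rintro ⟨I, J⟩ -
    refine Prod.ext (mem_ext fun k hk => ?_) (mem_ext fun k hk => ?_)
    · simp only
      rw [memVal_mkMem _ (fun k _ => memVal_le _ _) _ hk,
        memVal_mkMem _ (fun k _ => hl _ _ k) _ (by omega)]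
      simp [glue, hk]
    · simp only
      have h0 : ∀ k, k < b → memVal (mkMem (a + 1 + b) (glue (a + 1) (memVal I) (memVal J)))
          (a + 1 + k) = memVal J k := by
        intro k hk
        rw [memVal_mkMem _ (fun k _ => hl _ _ k) _ (by omega)]
        have h3 : ¬ a + 1 + k < a + 1 := by omega
        simp only [glue, h3, if_false, Nat.add_sub_cancel_left]
      rw [memVal_mkMem _ _ _ hk, h0 k hk]
      intro k hk
      rw [h0 k hk]; exact memVal_le _ _
  · intro I hI
    simp only [Finset.mem_filter, Finset.mem_univ, true_and] at hI
    apply hF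
    intro k hk
    unfold glue
    split_ifs with h
    · exact (memVal_mkMem _ (fun k _ => memVal_le _ _) _ h).symm
    · rw [memVal_mkMem _ _ _ (by omega)]
      · congr 1; omega
      · intro k hk
        have := hI (a + 1 + k) (by omega) (by omega)
        omega

/-- Product weight of a configuration on the positions `0, …, N`. -/
def wt (g : ℕ → ℕ → ℝ) (N : ℕ) (I : ℕ → ℕ) : ℝ := ∏ k ∈ Finset.range (N + 1), g k (I k)

def isConn (N : ℕ) (I : ℕ → ℕ) : Prop := ∀ j, j < N → ¬ cutAt (N + 1) I j

/-- Total weight of connected configurations. -/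
def conn (g : ℕ → ℕ → ℝ) (N : ℕ) : ℝ :=
  ∑ I : Mem (N + 1), if isConn N (memVal I) then wt g N (memVal I) else 0

def tot (g : ℕ → ℕ → ℝ) (N : ℕ) : ℝ := ∑ I : Mem (N + 1), wt g N (memVal I)

def shift (a : ℕ) (g : ℕ → ℕ → ℝ) (k i : ℕ) : ℝ := g (a + k) i

/-- There is at least one cut. -/
def hasCut (N : ℕ) (I : ℕ → ℕ) : Prop := ¬ isConn N I

/-- Total weight of configurations with at least one cut. -/
def tot1 (g : ℕ → ℕ → ℝ) (N : ℕ) : ℝ :=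
  ∑ I : Mem (N + 1), if hasCut N (memVal I) then wt g N (memVal I) else 0

/-- Total weight of configurations with at least two cuts. -/
def tot2 (g : ℕ → ℕ → ℝ) (N : ℕ) : ℝ :=
  ∑ I : Mem (N + 1), if (∃ i j, i < j ∧ j < N ∧ cutAt (N + 1) (memVal I) i ∧
    cutAt (N + 1) (memVal I) j) then wt g N (memVal I) else 0

lemma wt_congr {g h : ℕ → ℕ → ℝ} {N : ℕ} (H : ∀ k i, k ≤ N → i ≤ k → g k i = h k i)
    (I : Mem (N + 1)) : wt g N (memVal I) = wt h N (memVal I) := by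
  refine Finset.prod_congr rfl fun k hk => H _ _ ?_ (memVal_le _ _)
  have := Finset.mem_range.mp hk; omega

lemma conn_congr {g h : ℕ → ℕ → ℝ} {N : ℕ} (H : ∀ k i, k ≤ N → i ≤ k → g k i = h k i) :
    conn g N = conn h N := by
  refine Finset.sum_congr rfl fun I _ => ?_
  rw [wt_congr H]

lemma tot_congr {g h : ℕ → ℕ → ℝ} {N : ℕ} (H : ∀ k i, k ≤ N → i ≤ k → g k i = h k i) :
    tot g N = tot h N := Finset.sum_congr rfl fun I _ => wt_congr H I

lemma wt_glue (g : ℕ → ℕ → ℝ) (a N : ℕ) (ha : a < N) (f f' : ℕ → ℕ) :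
    wt g N (glue (a + 1) f f') = wt g a f * wt (shift (a + 1) g) (N - 1 - a) f' := by
  have : N + 1 = (a + 1) + (N - 1 - a + 1) := by omega
  unfold wt
  rw [this, Finset.prod_range_add]
  congr 1
  · refine Finset.prod_congr rfl fun k hk => ?_
    simp [glue, Finset.mem_range.mp hk]
  · refine Finset.prod_congr rfl fun k hk => ?_
    have h3 : ¬ a + 1 + k < a + 1 := by omega
    simp only [glue, shift, h3, if_false, Nat.add_sub_cancel_left]

lemma cutAt_congr {P j : ℕ} {f g : ℕ → ℕ} (h : ∀ k, k < P → f k = g k) :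
    cutAt P f j ↔ cutAt P g j := by
  unfold cutAt
  refine forall_congr' fun m => forall_congr' fun h1 => forall_congr' fun h2 => ?_
  rw [h m h2]

lemma first_cut (N : ℕ) (I : ℕ → ℕ) (F : ℝ) :
    (if ¬ isConn N I then F else 0) = ∑ a ∈ Finset.range N,
      if cutAt (N + 1) I a then (if ∀ j, j < a → ¬ cutAt (N + 1) I j then F else 0) else 0 := by
  by_cases h : isConn N I
  · rw [if_neg (not_not.mpr h)]
    symm
    refine Finset.sum_eq_zero fun a ha => ?_
    rw [if_neg (h a (Finset.mem_range.mp ha))]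
  · rw [if_pos h]
    have h' : ∃ j, j < N ∧ cutAt (N + 1) I j := by
      unfold isConn at h; push Not at h; exact h
    have hs := Nat.find_spec h'
    have hm : ∀ j, j < Nat.find h' → ¬ cutAt (N + 1) I j := fun j hj hc =>
      Nat.find_min h' hj ⟨by omega, hc⟩
    rw [Finset.sum_eq_single (Nat.find h')]
    · rw [if_pos hs.2, if_pos hm]
    · intro b hb hne
      split_ifs with h1 h2
      · exfalso
        rcases lt_or_gt_of_ne hne with h3 | h3
        · exact hm b h3 h1
        · exact h2 _ h3 hs.2
      · rfl
      · rfl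
    · intro h3
      exact absurd (Finset.mem_range.mpr hs.1) h3

/-- First-cut decomposition of a general sum. -/
lemma first_decomp (N : ℕ) (g : ℕ → ℕ → ℝ) (Q : (ℕ → ℕ) → Prop)
    (Q' : ℕ → (ℕ → ℕ) → Prop)
    (hQ : ∀ f f', (∀ k, k < N + 1 → f k = f' k) → (Q f ↔ Q f'))
    (hQc : ∀ f, Q f → ¬ isConn N f)
    (hQ' : ∀ a, a < N → ∀ (I : Mem (a + 1)) (J : Mem (N - 1 - a + 1)), isConn a (memVal I) →
      (Q (glue (a + 1) (memVal I) (memVal J)) ↔ Q' a (memVal J))) :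
    (∑ I : Mem (N + 1), if Q (memVal I) then wt g N (memVal I) else 0) =
      ∑ a ∈ Finset.range N, conn g a *
        ∑ J : Mem (N - 1 - a + 1), if Q' a (memVal J) then
          wt (shift (a + 1) g) (N - 1 - a) (memVal J) else 0 := by
  have h1 : ∀ I : Mem (N + 1), (if Q (memVal I) then wt g N (memVal I) else 0) =
      if ¬ isConn N (memVal I) then (if Q (memVal I) then wt g N (memVal I) else 0) else 0 := by
    intro I
    by_cases h : Q (memVal I)
    · rw [if_pos (hQc _ h)]
    · simp [h]
  rw [Finset.sum_congr rfl fun I _ => (h1 I).trans (first_cut N _ _), Finset.sum_comm]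
  refine Finset.sum_congr rfl fun a ha => ?_
  have ha := Finset.mem_range.mp ha
  rw [sum_split a (N - 1 - a + 1) (N + 1) (by omega) (fun f =>
    if ∀ j, j < a → ¬ cutAt (N + 1) f j then if Q f then wt g N f else 0 else 0)]
  · unfold conn
    rw [Finset.sum_mul]
    refine Finset.sum_congr rfl fun I _ => ?_
    rw [Finset.mul_sum]
    refine Finset.sum_congr rfl fun J _ => ?_
    have e : N + 1 = a + 1 + (N - 1 - a + 1) := by omega
    have hc : (∀ j, j < a → ¬ cutAt (N + 1) (glue (a + 1) (memVal I) (memVal J)) j) ↔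
        isConn a (memVal I) := by
      refine forall_congr' fun j => forall_congr' fun hj => ?_
      rw [e, cut_glue_left _ _ (memVal_le J) hj]
    by_cases h : isConn a (memVal I)
    · rw [if_pos (hc.mpr h), if_pos h]
      by_cases h2 : Q' a (memVal J)
      · rw [if_pos ((hQ' a ha I J h).mpr h2), if_pos h2, wt_glue g a N ha]
      · rw [if_neg (mt (hQ' a ha I J h).mp h2), if_neg h2, mul_zero]
    · rw [if_neg (mt hc.mp h), if_neg h, zero_mul]
  · intro f f' hff
    have e1 : ∀ j, cutAt (N + 1) f j ↔ cutAt (N + 1) f' j := fun j => cutAt_congr hff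
    have e2 : wt g N f = wt g N f' := Finset.prod_congr rfl fun k hk => by
      rw [hff k (Finset.mem_range.mp hk)]
    simp only [e1, e2, hQ f f' hff]

lemma cut_glue_self {a b : ℕ} (f g : ℕ → ℕ) (hg : ∀ k, g k ≤ k) :
    cutAt (a + 1 + b) (glue (a + 1) f g) a := by
  intro m h1 h2
  have h3 : ¬ m < a + 1 := by omega
  simp only [glue, h3, if_false]
  have := hg (m - (a + 1)); omega

lemma tot1_eq (g : ℕ → ℕ → ℝ) (N : ℕ) :
    tot1 g N = ∑ a ∈ Finset.range N, conn g a * tot (shift (a + 1) g) (N - 1 - a) := by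
  unfold tot1
  rw [first_decomp N g (fun f => hasCut N f) (fun _ _ => True)]
  · simp [tot]
  · intro f f' h
    unfold hasCut isConn
    simp only [fun j => cutAt_congr (j := j) h]
  · exact fun f h => h
  · intro a ha I J _
    simp only [iff_true]
    intro h
    refine h a ha ?_
    have e : N + 1 = a + 1 + (N - 1 - a + 1) := by omega
    rw [e]
    exact cut_glue_self _ _ (memVal_le J)

lemma tot_eq (g : ℕ → ℕ → ℝ) (N : ℕ) :
    tot g N = conn g N + ∑ a ∈ Finset.range N, conn g a * tot (shift (a + 1) g) (N - 1 - a) := by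
  rw [← tot1_eq]
  unfold tot conn tot1
  rw [← Finset.sum_add_distrib]
  refine Finset.sum_congr rfl fun I _ => ?_
  by_cases h : isConn N (memVal I) <;> simp [h, hasCut]

lemma tot2_eq (g : ℕ → ℕ → ℝ) (N : ℕ) :
    tot2 g N = ∑ a ∈ Finset.range N, conn g a * tot1 (shift (a + 1) g) (N - 1 - a) := by
  unfold tot2
  rw [first_decomp N g (fun f => ∃ i j, i < j ∧ j < N ∧ cutAt (N + 1) f i ∧
    cutAt (N + 1) f j) (fun a f => hasCut (N - 1 - a) f)]
  · simp only [tot1]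
  · intro f f' h
    simp only [fun j => cutAt_congr (j := j) h]
  · rintro f ⟨i, j, hij, hj, -, hc⟩ h
    exact h j hj hc
  · intro a ha I J hI
    have e : N + 1 = a + 1 + (N - 1 - a + 1) := by omega
    rw [e]
    constructor
    · rintro ⟨i, j, hij, hj, hci, hcj⟩ hJ
      have hi : a ≤ i := by
        by_contra hlt
        push Not at hlt
        rw [cut_glue_left _ _ (memVal_le J) hlt] at hci
        exact hI i hlt hci
      obtain ⟨k, rfl⟩ : ∃ k, j = a + 1 + k := ⟨j - (a + 1), by omega⟩
      rw [cut_glue_right] at hcj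
      exact hJ k (by omega) hcj
    · intro h
      unfold hasCut isConn at h
      push Not at h
      obtain ⟨k, hk, hc⟩ := h
      exact ⟨a, a + 1 + k, by omega, by omega, cut_glue_self _ _ (memVal_le J),
        (cut_glue_right _ _).mpr hc⟩

section weights
variable {A BL BR : Type*} (w : BL → ℝ) (ψ : BL × List A → A ⊕ BR → ℝ)

/-- The symbol in position `k` of `y ⊔ b_R`. -/
def sym (y : List A) (bR : BR) (k : ℕ) : A ⊕ BR :=
  if h : k < y.length then Sum.inl (y.get ⟨k, h⟩) else Sum.inr bR

/-- The weights of a pure word. -/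
def hW (y : List A) (bR : BR) (k i : ℕ) : ℝ := dW ψ (y.take k) i (sym y bR k)

/-- The weights of a word with left boundary. -/
def gW (bL : BL) (y : List A) (bR : BR) : ℕ → ℕ → ℝ
  | 0, _ => w bL
  | k + 1, i => dCtx ψ bL (y.take k) i (sym y bR k)

lemma sym_drop (y : List A) (bR : BR) (a k : ℕ) (ha : a ≤ y.length) :
    sym (y.drop a) bR k = sym y bR (a + k) := by
  unfold sym
  by_cases h : a + k < y.length
  · have h' : k < (y.drop a).length := by simp; omega
    rw [dif_pos h, dif_pos h']
    simp
  · have h' : ¬ k < (y.drop a).length := by simp; omega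
    rw [dif_neg h, dif_neg h']

lemma sym_take (y : List A) (bR : BR) (a k : ℕ) (ha : a ≤ y.length) (hk : k < a) :
    sym (y.take a) bR k = sym y bR k := by
  unfold sym
  have h : k < y.length := by omega
  have h' : k < (y.take a).length := by simp; omega
  rw [dif_pos h, dif_pos h']
  simp

lemma aW_drop (y : List A) (c i : ℕ) (s : A ⊕ BR) (h : c + i ≤ y.length) :
    aW ψ y i s = aW ψ (y.drop c) i s := by
  unfold aW
  have : (y.drop c).drop ((y.drop c).length - i) = y.drop (y.length - i) := by
    rw [List.drop_drop, List.length_drop]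
    congr 1; omega
  rw [this]

lemma dW_drop (y : List A) (c i : ℕ) (s : A ⊕ BR) (h : c + i ≤ y.length) :
    dW ψ y i s = dW ψ (y.drop c) i s := by
  cases i with
  | zero => exact aW_drop ψ y c 0 s h
  | succ i =>
    simp only [dW]
    rw [aW_drop ψ y c (i + 1) s h, aW_drop ψ y c i s (by omega)]

lemma dCtx_eq (bL : BL) (y : List A) (i : ℕ) (s : A ⊕ BR) (h : i ≤ y.length) :
    dCtx ψ bL y i s = dW ψ y i s := by
  cases i with
  | zero => simp [dCtx, dW, aCtx]
  | succ i =>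
    have h' : i ≤ y.length := by omega
    simp [dCtx, dW, aCtx, h, h']

lemma shift_hW (y : List A) (bR : BR) (c k i : ℕ) (hi : i ≤ k) (hk : c + k ≤ y.length) :
    shift c (hW ψ y bR) k i = hW ψ (y.drop c) bR k i := by
  unfold shift hW
  rw [sym_drop _ _ _ _ (by omega), dW_drop ψ _ c i _ (by simp; omega)]
  congr 1
  rw [List.drop_take]; congr 1; omega

lemma shift_gW (bL : BL) (y : List A) (bR : BR) (c k i : ℕ) (hi : i ≤ k)
    (hk : c + k ≤ y.length) :
    shift (c + 1) (gW w ψ bL y bR) k i = hW ψ (y.drop c) bR k i := by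
  rw [← shift_hW ψ y bR c k i hi hk]
  unfold shift
  rw [show c + 1 + k = (c + k) + 1 by omega]
  simp only [gW, hW]
  exact dCtx_eq ψ bL _ _ _ (by simp; omega)

lemma hW_take (y : List A) (bR : BR) (c k i : ℕ) (hk : k < c) (hc : c ≤ y.length) :
    hW ψ (y.take c) bR k i = hW ψ y bR k i := by
  unfold hW
  rw [sym_take _ _ _ _ hc hk, List.take_take, min_eq_left hk.le]

lemma gW_take (bL : BL) (y : List A) (bR : BR) (c k i : ℕ) (hk : k ≤ c) (hc : c ≤ y.length) :
    gW w ψ bL (y.take c) bR k i = gW w ψ bL y bR k i := by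
  cases k with
  | zero => rfl
  | succ k =>
    simp only [gW]
    rw [sym_take _ _ _ _ hc (by omega), List.take_take, min_eq_left (by omega)]

lemma rhoL_eq (bL : BL) (y : List A) (bR : BR) :
    rhoL w ψ bL y = conn (gW w ψ bL y bR) y.length := by
  unfold rhoL conn
  rw [Finset.mul_sum]
  refine Finset.sum_congr rfl fun I _ => ?_
  unfold isConn
  rw [mul_ite, mul_zero]
  congr 1
  unfold wt
  rw [Finset.prod_range_succ', mul_comm]
  simp only [gW]
  congr 1
  rw [Finset.prod_range]
  refine Finset.prod_congr rfl fun k _ => ?_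
  simp [sym]

lemma memW_eq (bL : BL) (y : List A) (bR : BR) (I : ℕ → ℕ) :
    memW w ψ bL y bR I = wt (gW w ψ bL y bR) (y.length + 1) I := by
  unfold memW wt
  rw [Finset.prod_range_succ, Finset.prod_range_succ', mul_comm (w bL)]
  simp only [gW]
  congr 1
  · congr 1
    rw [Finset.prod_range]
    refine Finset.prod_congr rfl fun k _ => ?_
    simp [sym]
  · simp [sym]

/-- Removing the isolated site `0`. -/
lemma strip (N : ℕ) (h : ℕ → ℕ → ℝ) :
    (∑ I : Mem (N + 2), if cutAt (N + 2) (memVal I) 0 ∧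
        (∀ j, 0 < j → j < N + 1 → ¬ cutAt (N + 2) (memVal I) j) then
      ∏ k ∈ Finset.range (N + 1), h k (memVal I (k + 1)) else 0) = conn h N := by
  have := sum_split 0 (N + 1) (N + 2) (by omega) (fun f =>
    if (∀ j, 0 < j → j < N + 1 → ¬ cutAt (N + 2) f j) then
      ∏ k ∈ Finset.range (N + 1), h k (f (k + 1)) else 0) ?_
  · simp only [ite_and]
    rw [this]
    have hu : Unique (Mem (0 + 1)) :=
      ⟨⟨mkMem 1 (fun _ => 0)⟩, fun I => mem_ext fun k hk => by
        have h1 := memVal_le I k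
        have h2 := memVal_le (mkMem 1 (fun _ => 0)) k
        have : k = 0 := by omega
        subst this
        exact (Nat.le_zero.mp h1).trans (Nat.le_zero.mp h2).symm⟩
    have hconst : ∀ I : Mem (0 + 1), (∑ J : Mem (N + 1),
        (if (∀ j, 0 < j → j < N + 1 → ¬ cutAt (N + 2) (glue (0 + 1) (memVal I) (memVal J)) j) then
          ∏ k ∈ Finset.range (N + 1), h k (glue (0 + 1) (memVal I) (memVal J) (k + 1)) else 0)) =
        conn h N := by
      intro I
      unfold conn
      refine Finset.sum_congr rfl fun J _ => ?_
      have e1 : (∀ j, 0 < j → j < N + 1 →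
          ¬ cutAt (N + 2) (glue (0 + 1) (memVal I) (memVal J)) j) ↔ isConn N (memVal J) := by
        have e : N + 2 = 0 + 1 + (N + 1) := by omega
        rw [e]
        constructor
        · intro H j hj hc
          exact H (0 + 1 + j) (by omega) (by omega) ((cut_glue_right _ _).mpr hc)
        · intro H j hj hj' hc
          obtain ⟨k, rfl⟩ : ∃ k, j = 0 + 1 + k := ⟨j - 1, by omega⟩
          exact H k (by omega) ((cut_glue_right _ _).mp hc)
      have e2 : (∏ k ∈ Finset.range (N + 1), h k (glue (0 + 1) (memVal I) (memVal J) (k + 1))) =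
          wt h N (memVal J) := Finset.prod_congr rfl fun k _ => by simp [glue]
      simp only [e1, e2]
    rw [Finset.sum_congr rfl fun I _ => hconst I]
    have hc : Fintype.card (Mem (0 + 1)) = 1 :=
      Fintype.card_eq_one_iff.mpr ⟨hu.default, hu.uniq⟩
    simp
  · intro f g hfg
    have e1 : ∀ j, cutAt (N + 2) f j ↔ cutAt (N + 2) g j := fun j => cutAt_congr hfg
    have e2 : (∏ k ∈ Finset.range (N + 1), h k (f (k + 1))) =
        ∏ k ∈ Finset.range (N + 1), h k (g (k + 1)) := Finset.prod_congr rfl fun k hk => by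
      rw [hfg (k + 1) (by have := Finset.mem_range.mp hk; omega)]
    simp only [e1, e2]

lemma pW_eq (y : List A) (bR : BR) (N : ℕ) (hN : y.length = N + 1) :
    pW ψ y = conn (hW ψ y bR) N := by
  rw [← strip]
  have hp : ∀ f : ℕ → ℕ, (∏ k : Fin y.length, dW ψ (y.take k.1) (f (k.1 + 1))
      (Sum.inl (y.get k))) = ∏ k ∈ Finset.range y.length, hW ψ y bR k (f (k + 1)) := by
    intro f
    rw [Finset.prod_range]
    refine Finset.prod_congr rfl fun k _ => ?_
    simp [hW, sym]
  unfold pW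
  simp only [hp]
  rw [hN]

lemma rhoR_eq (y : List A) (bR : BR) :
    rhoR ψ y bR = conn (hW ψ y bR) y.length := by
  rw [← strip]
  have hp : ∀ f : ℕ → ℕ, ((∏ k : Fin y.length, dW ψ (y.take k.1) (f (k.1 + 1))
      (Sum.inl (y.get k))) * dW ψ y (f (y.length + 1)) (Sum.inr bR))
        = ∏ k ∈ Finset.range (y.length + 1), hW ψ y bR k (f (k + 1)) := by
    intro f
    rw [Finset.prod_range_succ, Finset.prod_range]
    congr 1
    · refine Finset.prod_congr rfl fun k _ => ?_
      simp [hW, sym]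
    · simp [hW, sym]
  unfold rhoR
  simp only [hp]

/-- Decompositions of a word into middle blocks and a last block. -/
abbrev Dec (y : List A) : Type _ :=
  {e : List (List A) × List A // y = e.1.flatten ++ e.2 ∧ ∀ m ∈ e.1, m ≠ []}

/-- Prepend the block of length `a + 1`. -/
def consDec (y : List A) : Option (Σ a : Fin y.length, Dec (y.drop (a.1 + 1))) → Dec y
  | none => ⟨([], y), by simp⟩
  | some ⟨a, e⟩ => ⟨(y.take (a.1 + 1) :: e.1.1, e.1.2), by
      constructor
      · simp only [List.flatten_cons, List.append_assoc]
        rw [← e.2.1, List.take_append_drop]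
      · intro m hm
        rcases List.mem_cons.mp hm with rfl | hm
        · have := a.2
          intro h0
          have := congrArg List.length h0
          rw [List.length_take, List.length_nil] at this
          omega
        · exact e.2.2 m hm⟩

lemma consDec_bij (y : List A) : Function.Bijective (consDec y) := by
  constructor
  · rintro (_ | ⟨a, e, he⟩) (_ | ⟨b, f, hf⟩) h
    · rfl
    · simp [consDec] at h
    · simp [consDec] at h
    · simp only [consDec, Subtype.mk.injEq, Prod.mk.injEq, List.cons.injEq] at h
      obtain ⟨⟨h1, h2⟩, h3⟩ := h
      have hab : a = b := by
        have := congrArg List.length h1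
        have := a.2
        have := b.2
        simp at *
        ext; omega
      subst hab
      have : e = f := Prod.ext h2 h3
      subst this
      rfl
  · rintro ⟨⟨ms, r⟩, h1, h2⟩
    cases ms with
    | nil =>
      refine ⟨none, ?_⟩
      simp at h1
      simp [consDec, h1]
    | cons m ms =>
      have hm : m ≠ [] := h2 m (by simp)
      have hl : 0 < m.length := List.length_pos_iff.mpr hm
      simp only [List.flatten_cons, List.append_assoc] at h1
      subst h1
      refine ⟨some ⟨⟨m.length - 1, by simp; omega⟩, ⟨(ms, r), ?_, ?_⟩⟩, ?_⟩
      · rw [Nat.sub_add_cancel hl]; simp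
      · exact fun m' hm' => h2 m' (by simp [hm'])
      · simp only [consDec, Nat.sub_add_cancel hl]
        simp

lemma dec_sum (bR : BR) : ∀ (N : ℕ) (y : List A), y.length = N →
    Finite (Dec y) ∧ ∑' e : Dec y, (e.1.1.map (pW ψ)).prod * rhoR ψ e.1.2 bR =
      tot (hW ψ y bR) y.length := by
  intro N
  induction N using Nat.strong_induction_on with
  | _ N ih =>
  intro y hy
  have ih' : ∀ a : Fin y.length, Finite (Dec (y.drop (a.1 + 1))) ∧
      ∑' e : Dec (y.drop (a.1 + 1)), (e.1.1.map (pW ψ)).prod * rhoR ψ e.1.2 bR =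
      tot (hW ψ (y.drop (a.1 + 1)) bR) (y.drop (a.1 + 1)).length := by
    intro a
    have := a.2
    exact ih _ (by simp; omega) _ rfl
  haveI : ∀ a : Fin y.length, Finite (Dec (y.drop (a.1 + 1))) := fun a => (ih' a).1
  let E := Equiv.ofBijective _ (consDec_bij y)
  refine ⟨Finite.of_equiv _ E, ?_⟩
  haveI : ∀ a : Fin y.length, Fintype (Dec (y.drop (a.1 + 1))) := fun a => Fintype.ofFinite _
  rw [← Equiv.tsum_eq E, tsum_fintype, Fintype.sum_option, Fintype.sum_sigma, tot_eq]
  congr 1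
  · simp [E, consDec, rhoR_eq]
  · rw [Finset.sum_range]
    refine Finset.sum_congr rfl fun a _ => ?_
    have ha := a.2
    have hk : conn (hW ψ y bR) a.1 = pW ψ (y.take (a.1 + 1)) := by
      rw [pW_eq ψ _ bR a.1 (by rw [List.length_take]; omega)]
      exact conn_congr fun k i h1 h2 => (hW_take ψ y bR _ _ _ (by omega) (by omega)).symm
    have ht : tot (shift (a.1 + 1) (hW ψ y bR)) (y.length - 1 - a.1) =
        tot (hW ψ (y.drop (a.1 + 1)) bR) (y.drop (a.1 + 1)).length := by
      have : (y.drop (a.1 + 1)).length = y.length - 1 - a.1 := by simp; omega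
      rw [this]
      exact tot_congr fun k i h1 h2 => shift_hW ψ y bR _ _ _ h2 (by omega)
    rw [hk, ht, ← (ih' a).2, tsum_fintype, Finset.mul_sum]
    refine Finset.sum_congr rfl fun e _ => ?_
    simp [E, consDec, mul_assoc]

/-- Full decompositions. -/
abbrev FDec (x : List A) : Type _ := {d : List A × List (List A) × List A //
        x = d.1 ++ d.2.1.flatten ++ d.2.2 ∧ d.2.1 ≠ [] ∧ ∀ m ∈ d.2.1, m ≠ []}

def consF (x : List A) : (Σ a : Fin (x.length + 1), Σ b : Fin (x.drop a.1).length,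
    Dec ((x.drop a.1).drop (b.1 + 1))) → FDec x
  | ⟨a, b, e⟩ => ⟨(x.take a.1, (consDec (x.drop a.1) (some ⟨b, e⟩)).1), by
      refine ⟨?_, by simp [consDec], (consDec (x.drop a.1) (some ⟨b, e⟩)).2.2⟩
      rw [List.append_assoc, ← (consDec (x.drop a.1) (some ⟨b, e⟩)).2.1,
        List.take_append_drop]⟩

lemma consF_bij (x : List A) : Function.Bijective (consF x) := by
  constructor
  · rintro ⟨a, p⟩ ⟨a', p'⟩ h
    have h1 := congrArg (fun d : FDec x => d.1.1) h
    have h2 := congrArg (fun d : FDec x => d.1.2) h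
    have haa : a = a' := by
      have := congrArg List.length h1
      have := a.2
      have := a'.2
      simp [consF] at *
      ext; omega
    subst haa
    simp only [consF] at h2
    have h3 := (consDec_bij (x.drop a.1)).1 (Subtype.ext h2)
    have h4 : p = p' := Option.some.inj h3
    rw [h4]
  · rintro ⟨⟨l, ms, r⟩, h1, h2, h3⟩
    simp only [List.append_assoc] at h1 h2 h3
    have hd : x.drop l.length = ms.flatten ++ r := by rw [h1]; simp
    have htk : x.take l.length = l := by rw [h1]; simp
    have hl : l.length < x.length + 1 := by rw [h1, List.length_append]; omega
    obtain ⟨o, ho⟩ := (consDec_bij (x.drop l.length)).2 ⟨(ms, r), hd, h3⟩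
    cases o with
    | none =>
      have := congrArg (fun d => d.1.1) ho
      simp [consDec] at this
      exact absurd this h2
    | some p =>
      refine ⟨⟨⟨l.length, hl⟩, p⟩, ?_⟩
      apply Subtype.ext
      refine Prod.ext htk ?_
      exact congrArg Subtype.val ho

lemma event_iff (n : ℕ) (I : ℕ → ℕ) :
    (2 ≤ numClusters n I ∧ firstClusterLen n I + lastClusterLen n I < n + 2) ↔
      ∃ i j, i < j ∧ j < n + 1 ∧ cutAt (n + 2) I i ∧ cutAt (n + 2) I j := by
  have hmem : ∀ j, j ∈ cutFinset n I ↔ j < n + 1 ∧ cutAt (n + 2) I j := by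
    intro j; simp [cutFinset]
  constructor
  · rintro ⟨h1, h2⟩
    have hne : (cutFinset n I).Nonempty := by
      rw [← Finset.card_pos]; unfold numClusters at h1; omega
    unfold firstClusterLen lastClusterLen at h2
    rw [dif_pos hne, dif_pos hne] at h2
    have hi := (hmem _).mp (Finset.min'_mem _ hne)
    have hj := (hmem _).mp (Finset.max'_mem _ hne)
    exact ⟨_, _, by omega, hj.1, hi.2, hj.2⟩
  · rintro ⟨i, j, hij, hj, hci, hcj⟩
    have mi := (hmem i).mpr ⟨by omega, hci⟩
    have mj := (hmem j).mpr ⟨hj, hcj⟩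
    have hne : (cutFinset n I).Nonempty := ⟨i, mi⟩
    have h1 := Finset.min'_le _ i mi
    have h2 := Finset.le_max' _ j mj
    have h3 := ((hmem _).mp (Finset.max'_mem _ hne)).1
    refine ⟨?_, ?_⟩
    · have := Finset.card_pos.mpr hne
      unfold numClusters; omega
    · unfold firstClusterLen lastClusterLen
      rw [dif_pos hne, dif_pos hne]
      omega

lemma rhs_eq (bL : BL) (x : List A) (bR : BR) :
    ∑' d : FDec x, rhoL w ψ bL d.1.1 * ((d.1.2.1.map (pW ψ)).prod) * rhoR ψ d.1.2.2 bR =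
      tot2 (gW w ψ bL x bR) (x.length + 1) := by
  let E := Equiv.ofBijective _ (consF_bij x)
  haveI : ∀ y : List A, Fintype (Dec y) := fun y =>
    @Fintype.ofFinite _ (dec_sum ψ bR _ y rfl).1
  rw [← Equiv.tsum_eq E, tsum_fintype, Fintype.sum_sigma, tot2_eq, Finset.sum_range]
  refine Finset.sum_congr rfl fun a _ => ?_
  have ha := a.2
  rw [Fintype.sum_sigma, tot1_eq, Finset.mul_sum]
  have hl : (x.drop a.1).length = x.length + 1 - 1 - a.1 := by simp
  rw [← hl, Finset.sum_range]
  refine Finset.sum_congr rfl fun b _ => ?_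
  have hb := b.2
  have h1 : conn (gW w ψ bL x bR) a.1 = rhoL w ψ bL (x.take a.1) := by
    rw [rhoL_eq w ψ bL _ bR]
    have : (x.take a.1).length = a.1 := by simp; omega
    rw [this]
    exact conn_congr fun k i h1 h2 => (gW_take w ψ bL x bR _ _ _ h1 (by omega)).symm
  have h2 : conn (shift (a.1 + 1) (gW w ψ bL x bR)) b.1 =
      pW ψ ((x.drop a.1).take (b.1 + 1)) := by
    rw [pW_eq ψ _ bR b.1 (by rw [List.length_take]; omega)]
    refine conn_congr fun k i h1 h2 => ?_
    rw [hW_take ψ _ bR _ _ _ (by omega) (by omega)]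
    exact shift_gW w ψ bL x bR _ _ _ h2 (by omega)
  have h3 : tot (shift (b.1 + 1) (shift (a.1 + 1) (gW w ψ bL x bR)))
      ((x.drop a.1).length - 1 - b.1) = tot (hW ψ ((x.drop a.1).drop (b.1 + 1)) bR)
        ((x.drop a.1).drop (b.1 + 1)).length := by
    have : ((x.drop a.1).drop (b.1 + 1)).length = (x.drop a.1).length - 1 - b.1 := by
      rw [List.length_drop]; omega
    rw [this]
    refine tot_congr fun k i h1 h2 => ?_
    rw [← shift_hW ψ _ bR _ _ _ h2 (by omega)]
    exact shift_gW w ψ bL x bR _ _ _ (by omega) (by omega)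
  rw [h1, h2, h3, ← (dec_sum ψ bR _ _ rfl).2, tsum_fintype, Finset.mul_sum, Finset.mul_sum]
  refine Finset.sum_congr rfl fun e _ => ?_
  simp [E, consF, consDec, mul_assoc]

end weights

end Renewal

open Renewal in
/-- The exact factorization identity: the `Ψ_n`-mass of the event `A` (at least two
clusters, and the first and last cluster lengths sum to less than `n+2`), for a fixed
sequence `b_L ⊔ 𝐱 ⊔ b_R`, equals the sum over all decompositions of the positions into
consecutive blocks of the product `ρ_L · ∏ 𝐩 · ρ_R` of the block weights. -/
theorem stmt4
    {A BL BR : Type*} [Countable A] [Countable BL] [Countable BR]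
    (w : BL → ℝ) (ψ : BL × List A → A ⊕ BR → ℝ)
    (hw : ∀ b, 0 ≤ w b) (hψ : ∀ b s, 0 ≤ ψ b s)
    (n : ℕ) (hn : 1 ≤ n) (bL : BL) (x : List A) (hx : x.length = n) (bR : BR) :
    (∑ I : Mem (n + 2),
      if 2 ≤ numClusters n (memVal I) ∧
          firstClusterLen n (memVal I) + lastClusterLen n (memVal I) < n + 2 then
        memW w ψ bL x bR (memVal I)
      else 0) =
    ∑' d : {d : List A × List (List A) × List A //
        x = d.1 ++ d.2.1.flatten ++ d.2.2 ∧ d.2.1 ≠ [] ∧ ∀ m ∈ d.2.1, m ≠ []},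
      rhoL w ψ bL d.1.1 * ((d.1.2.1.map (pW ψ)).prod) * rhoR ψ d.1.2.2 bR := by
  subst hx
  refine Eq.trans ?_ (rhs_eq w ψ bL x bR).symm
  unfold tot2
  refine Finset.sum_congr rfl fun I _ => ?_
  rw [memW_eq]
  exact if_congr (event_iff _ _) rfl rfl
end
end

section
/- Assume hypotheses (H1), (H2) and (H4), with constants K from (H1), L₀ and c from (H2), and ε₀ from (H4). Then for every word 𝐱 = 𝐱_1^n and every b ∈ B̄_L: Σ_{s ∈ 𝒜} a_n(s | 𝐱_1^n) ≥ (1 − e^{−c n}) · Σ_{s ∈ 𝒜} Ψ(s | b ⊔ 𝐱_1^n) whenever n ≥ L₀, and Σ_{s ∈ 𝒜} a_n(s | 𝐱_1^n) ≥ (ε₀/K) · Σ_{s ∈ 𝒜} Ψ(s | b ⊔ 𝐱_1^n) for every n, where a_n(s | 𝐱_1^n) = inf_{l ∈ B̄_L} Ψ(s | l ⊔ 𝐱_1^n). -/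
noncomputable section
open scoped Classical BigOperators

open Renewal in
/-- Under (H1), (H2) and (H4): the total mass of the full-depth infima `a_n(· | 𝐱)` over
the letters is comparable to that of `Ψ(· | b ⊔ 𝐱)`, uniformly in the context `b`. -/
theorem stmt19
    {A BL BR : Type*} [Countable A] [Nonempty BL]
    (ψ : BL × List A → A ⊕ BR → ℝ) (hψ : ∀ b s, 0 ≤ ψ b s)
    -- (H1): uniform summability
    (K : ℝ) (hsum : ∀ b : BL × List A, Summable fun s : A ⊕ BR => ψ b s)
    (hK : ∀ b : BL × List A, ∑' s : A ⊕ BR, ψ b s ≤ K)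
    -- (H2): ratio exponential mixing
    (L₀ : ℕ) (c : ℝ) (hc : 0 < c)
    (hmix : ∀ x : List A, L₀ ≤ x.length → ∀ (z : List A ⊕ BR) (b₁ b₂ : BL × List A),
      |1 - psiExt ψ (b₂.1, b₂.2 ++ x) z / psiExt ψ (b₁.1, b₁.2 ++ x) z| ≤
        Real.exp (-c * x.length))
    -- (H4)
    (s₀ : A) (ε₀ : ℝ) (hε₀ : 0 < ε₀) (hinf : ∀ b : BL × List A, ε₀ ≤ ψ b (Sum.inl s₀)) :
    ∀ (x : List A) (b : BL × List A),
      (L₀ ≤ x.length →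
        (1 - Real.exp (-c * x.length)) * (∑' s : A, ψ (b.1, b.2 ++ x) (Sum.inl s)) ≤
          ∑' s : A, aW ψ x x.length (Sum.inl s)) ∧
      (ε₀ / K) * (∑' s : A, ψ (b.1, b.2 ++ x) (Sum.inl s)) ≤
        ∑' s : A, aW ψ x x.length (Sum.inl s) := by
  intro x b
  have hnn : ∀ s, 0 ≤ aW ψ x x.length s := fun s => Real.iInf_nonneg fun l => hψ _ _
  have hle : ∀ (l : BL × List A) s, aW ψ x x.length s ≤ ψ (l.1, l.2 ++ x) s := by
    intro l s
    have h := ciInf_le (f := fun l : BL × List A =>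
      ψ (l.1, l.2 ++ x.drop (x.length - x.length)) s)
      ⟨0, by rintro _ ⟨l, rfl⟩; exact hψ _ _⟩ l
    simpa [aW] using h
  have hge : ∀ (r : ℝ) s, (∀ l : BL × List A, r ≤ ψ (l.1, l.2 ++ x) s) →
      r ≤ aW ψ x x.length s := by
    intro r s h
    unfold aW
    refine le_ciInf fun l => ?_
    simpa using h l
  have hsA : Summable fun s : A => ψ (b.1, b.2 ++ x) (Sum.inl s) :=
    (hsum (b.1, b.2 ++ x)).comp_injective Sum.inl_injective
  have hsa : Summable fun s : A => aW ψ x x.length (Sum.inl s) :=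
    Summable.of_nonneg_of_le (fun s => hnn _) (fun s => hle b _) hsA
  constructor
  · intro hL
    rw [← tsum_mul_left]
    refine Summable.tsum_le_tsum (fun s => ?_) (hsA.mul_left _) hsa
    refine hge _ _ fun l => ?_
    have h := hmix x hL (Sum.inl [s]) b l
    simp only [psiExt, List.length_singleton, Finset.univ_unique, Finset.prod_singleton] at h
    simp at h
    rcases (hψ (b.1, b.2 ++ x) (Sum.inl s)).eq_or_lt with h0 | h0
    · rw [← h0, mul_zero]; exact hψ _ _
    · have h2 := (abs_le.mp h).2
      rw [← le_div_iff₀ h0]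
      simp only [neg_mul]
      linarith
  · have h1 : ∑' s : A, ψ (b.1, b.2 ++ x) (Sum.inl s) ≤ K := by
      refine le_trans ?_ (hK (b.1, b.2 ++ x))
      exact hsA.tsum_le_tsum_of_inj Sum.inl Sum.inl_injective (fun c _ => hψ _ _)
        (fun s => le_rfl) (hsum _)
    have h2 : ε₀ ≤ ∑' s : A, aW ψ x x.length (Sum.inl s) :=
      (hge ε₀ _ fun l => hinf _).trans (hsa.le_tsum s₀ fun s _ => hnn _)
    have h3 : ε₀ ≤ K := (hinf (b.1, b.2 ++ x)).trans
      ((hsA.le_tsum s₀ fun s _ => hψ _ _).trans h1)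
    have hK0 : 0 < K := hε₀.trans_le h3
    refine le_trans ?_ h2
    calc ε₀ / K * _ ≤ ε₀ / K * K := by gcongr
      _ = ε₀ := by field_simp
end
end
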